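/- arXiv:2309.10384 — 4 statements merged into one kernel-verified Lean document; each statement's English description precedes it below -/
import Mathlib

section
/- Let p > 3 and h ∈ (1, p−2). For every c > 0 there exists L₀ ≥ 1 such that for all L ≥ L₀, all t ≥ 0 and all r > 0: ∫_0^t W(t−τ, r, f_τ) dτ ≤ c (cosh r)^{−1/2} ⟨t−r⟩^{−h}, where f_τ(λ) = (L+λ)^{1−p} ⟨τ−λ⟩^{−h} sinh λ · (cosh λ)^{−1/2}. -/
open MeasureTheory intervalIntegral

/-- The Japanese bracket `⟨x⟩ = (1 + x²)^{1/2}`. -/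
noncomputable def jap (x : ℝ) : ℝ := Real.sqrt (1 + x ^ 2)

/-- The kernel `W(σ,r,f)` arising from the Duhamel integral for the shifted wave equation
on the hyperbolic plane, with `a(s) = 2 cosh s` (so `a'(s) = 2 sinh s`). -/
noncomputable def Wker (σ r : ℝ) (f : ℝ → ℝ) : ℝ :=
  ∫ s in (0 : ℝ)..σ, ∫ l in |r - s|..(r + s),
    f l * (2 * Real.sinh s) *
      ((2 * Real.cosh σ - 2 * Real.cosh s) * (2 * Real.cosh (r + l) - 2 * Real.cosh s) *
        (2 * Real.cosh s - 2 * Real.cosh (r - l))) ^ (-(1 / 2) : ℝ)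

open Set Real

/-- The substitution `x = 2 cosh s` in `∫ dx / √((m - x)(x - d)) = π`. -/
lemma lintegral_arcsine_cosh_le {d e : ℝ} (hd : 0 ≤ d) :
    ∫⁻ s in Ioc d e, ENNReal.ofReal (2 * sinh s *
      ((2 * cosh e - 2 * cosh s) * (2 * cosh s - 2 * cosh d)) ^ (-(1 / 2) : ℝ)) ≤
      ENNReal.ofReal π := by
  rcases le_or_gt e d with hed | hde
  · simp [Ioc_eq_empty_of_le hed]
  have he : 0 < e := hd.trans_lt hde
  have hDM : cosh d < cosh e := by
    rw [cosh_lt_cosh, abs_of_nonneg hd, abs_of_pos he]; exact hde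
  have hpos : 0 < cosh e - cosh d := sub_pos.2 hDM
  set g : ℝ → ℝ := fun s => arcsin ((2 * cosh s - cosh e - cosh d) / (cosh e - cosh d)) with hg
  set g' : ℝ → ℝ := fun s => 2 * sinh s *
      ((2 * cosh e - 2 * cosh s) * (2 * cosh s - 2 * cosh d)) ^ (-(1 / 2) : ℝ) with hg'
  have hcont : ContinuousOn g (Icc d e) := by
    apply Continuous.continuousOn
    simp only [hg]
    fun_prop
  have hlt : ∀ s ∈ Ioo d e, cosh d < cosh s ∧ cosh s < cosh e := by
    intro s hs
    have hs0 : 0 < s := hd.trans_lt hs.1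
    rw [cosh_lt_cosh, cosh_lt_cosh, abs_of_nonneg hd, abs_of_pos he, abs_of_pos hs0]
    exact hs
  have hderiv : ∀ s ∈ Ioo d e, HasDerivAt g (g' s) s := by
    intro s hs
    obtain ⟨h1, h2⟩ := hlt s hs
    have hin : HasDerivAt (fun s => (2 * cosh s - cosh e - cosh d) / (cosh e - cosh d))
        (2 * sinh s / (cosh e - cosh d)) s :=
      ((((hasDerivAt_cosh s).const_mul 2).sub_const _).sub_const _).div_const _
    have hne1 : (2 * cosh s - cosh e - cosh d) / (cosh e - cosh d) ≠ -1 := by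
      intro h
      rw [div_eq_iff hpos.ne'] at h
      linarith
    have hne2 : (2 * cosh s - cosh e - cosh d) / (cosh e - cosh d) ≠ 1 := by
      intro h
      rw [div_eq_iff hpos.ne'] at h
      linarith
    refine ((hasDerivAt_arcsin hne1 hne2).comp s hin).congr_deriv ?_
    have hP : 0 < (2 * cosh e - 2 * cosh s) * (2 * cosh s - 2 * cosh d) :=
      mul_pos (by linarith) (by linarith)
    have hid : 1 - ((2 * cosh s - cosh e - cosh d) / (cosh e - cosh d)) ^ 2 =
        (2 * cosh e - 2 * cosh s) * (2 * cosh s - 2 * cosh d) / (cosh e - cosh d) ^ 2 := by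
      field_simp
      ring
    rw [hid, sqrt_div hP.le, sqrt_sq hpos.le, hg']
    simp only
    rw [rpow_neg hP.le, ← sqrt_eq_rpow]
    have := (sqrt_pos.2 hP).ne'
    field_simp
  have hnn : ∀ s ∈ Ioo d e, 0 ≤ g' s := by
    intro s hs
    obtain ⟨h1, h2⟩ := hlt s hs
    have : 0 ≤ sinh s := sinh_nonneg_iff.2 (hd.trans hs.1.le)
    have hP : 0 ≤ (2 * cosh e - 2 * cosh s) * (2 * cosh s - 2 * cosh d) :=
      mul_nonneg (by linarith) (by linarith)
    positivity
  have hint := intervalIntegral.integrableOn_deriv_of_nonneg hcont hderiv hnn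
  have hftc := intervalIntegral.integral_eq_sub_of_hasDerivAt_of_le hde.le hcont hderiv
    ((intervalIntegrable_iff_integrableOn_Ioc_of_le hde.le).2 hint)
  rw [intervalIntegral.integral_of_le hde.le] at hftc
  have hnn' : 0 ≤ᵐ[volume.restrict (Ioc d e)] g' := by
    rw [← restrict_Ioo_eq_restrict_Ioc]
    filter_upwards [ae_restrict_mem measurableSet_Ioo] with s hs using hnn s hs
  rw [← ofReal_integral_eq_lintegral_ofReal hint hnn', hftc]
  apply ENNReal.ofReal_le_ofReal
  have h1 := arcsin_le_pi_div_two ((2 * cosh e - cosh e - cosh d) / (cosh e - cosh d))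
  have h2 := neg_pi_div_two_le_arcsin ((2 * cosh d - cosh e - cosh d) / (cosh e - cosh d))
  simp only [hg]
  linarith

/-- Of the three factors, the one with the larger of `A`, `B` is replaced by the gap `|A - B|`. -/
lemma rpow_neg_half_triple_le {A B D x : ℝ} (hA : x ≤ A) (hB : x ≤ B) (hD : D ≤ x) (hne : A ≠ B) :
    ((A - x) * (B - x) * (x - D)) ^ (-(1 / 2) : ℝ) ≤
      |A - B| ^ (-(1 / 2) : ℝ) * ((min A B - x) * (x - D)) ^ (-(1 / 2) : ℝ) := by
  have hgap : 0 < |A - B| := abs_pos.2 (sub_ne_zero.2 hne)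
  have key : (A - x) * (B - x) * (x - D) = (max A B - x) * ((min A B - x) * (x - D)) := by
    rcases le_total A B with h | h
    · rw [max_eq_right h, min_eq_left h]; ring
    · rw [max_eq_left h, min_eq_right h]; ring
  have hmax : |A - B| ≤ max A B - x := by
    rcases le_total A B with h | h
    · rw [max_eq_right h, abs_of_nonpos (by linarith)]; linarith
    · rw [max_eq_left h, abs_of_nonneg (by linarith)]; linarith
  have hmin : 0 ≤ (min A B - x) * (x - D) :=
    mul_nonneg (sub_nonneg.2 (le_min hA hB)) (by linarith)
  rw [key, mul_rpow (hgap.le.trans hmax) hmin]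
  gcongr ?_ * _
  exact rpow_le_rpow_of_nonpos hgap hmax (by norm_num)

lemma two_mul_cosh_mono {x y : ℝ} (hx : 0 ≤ x) (hxy : x ≤ y) : 2 * cosh x ≤ 2 * cosh y := by
  have : cosh x ≤ cosh y := by
    rwa [cosh_le_cosh, abs_of_nonneg hx, abs_of_nonneg (hx.trans hxy)]
  linarith

lemma enorm_intervalIntegral_le {a b : ℝ} (hab : a ≤ b) (f : ℝ → ℝ) :
    ‖∫ x in a..b, f x‖ₑ ≤ ∫⁻ x in Ioc a b, ‖f x‖ₑ := by
  rw [intervalIntegral.integral_of_le hab]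
  exact enorm_integral_le_lintegral_enorm _

/-- After exchanging the order of integration, the `s`-integral in `Wker` is controlled by
`π |2 cosh σ - 2 cosh (r + l)|^{-1/2}`. -/
lemma enorm_Wker_le {σ r : ℝ} (hσ : 0 ≤ σ) (hr : 0 < r) {f : ℝ → ℝ} (hf : Measurable f)
    (hf0 : ∀ l, 0 < l → 0 ≤ f l) :
    ‖Wker σ r f‖ₑ ≤ ∫⁻ l, {l | 0 < l ∧ |r - l| ≤ σ}.indicator (fun l =>
      ENNReal.ofReal (f l * |2 * cosh σ - 2 * cosh (r + l)| ^ (-(1 / 2) : ℝ)) *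
        ENNReal.ofReal π) l := by
  set F : ℝ → ℝ → ℝ := fun s l => f l * (2 * sinh s) *
      ((2 * cosh σ - 2 * cosh s) * (2 * cosh (r + l) - 2 * cosh s) *
        (2 * cosh s - 2 * cosh (r - l))) ^ (-(1 / 2) : ℝ) with hF
  set S : Set (ℝ × ℝ) := {x | (0 < x.1 ∧ x.1 ≤ σ) ∧ (|r - x.1| < x.2 ∧ x.2 ≤ r + x.1)} with hS
  have hSm : MeasurableSet S := by
    apply MeasurableSet.inter
    · exact (measurableSet_lt measurable_const measurable_fst).inter
        (measurableSet_le measurable_fst measurable_const)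
    · exact (measurableSet_lt (by fun_prop) measurable_snd).inter
        (measurableSet_le measurable_snd (by fun_prop))
  set G : ℝ → ℝ → ENNReal := fun s l => S.indicator (fun x => ‖F x.1 x.2‖ₑ) (s, l) with hG
  have hGm : Measurable (Function.uncurry G) := by
    have : Measurable (fun x : ℝ × ℝ => ‖F x.1 x.2‖ₑ) := by
      simp only [hF]
      fun_prop
    exact this.indicator hSm
  have hWG : ‖Wker σ r f‖ₑ ≤ ∫⁻ s, ∫⁻ l, G s l := by
    refine (enorm_intervalIntegral_le hσ _).trans ?_
    rw [← lintegral_indicator measurableSet_Ioc]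
    refine lintegral_mono fun s => ?_
    by_cases hs : s ∈ Ioc 0 σ
    · rw [indicator_of_mem hs]
      have hle : |r - s| ≤ r + s := by
        rw [abs_le]; constructor <;> linarith [hs.1]
      refine (enorm_intervalIntegral_le hle _).trans ?_
      rw [← lintegral_indicator measurableSet_Ioc]
      refine lintegral_mono fun l => ?_
      by_cases hl : l ∈ Ioc |r - s| (r + s)
      · have hmem : (s, l) ∈ S := ⟨hs, hl⟩
        simp only [hG, indicator_of_mem hl, indicator_of_mem hmem, hF, le_refl]
      · rw [indicator_of_notMem hl]; exact zero_le
    · rw [indicator_of_notMem hs]; exact zero_le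
  refine hWG.trans ?_
  rw [lintegral_lintegral_swap hGm.aemeasurable]
  refine lintegral_mono_ae ?_
  have hae : ∀ᵐ l : ℝ, l ≠ σ - r := by
    simp [ae_iff]
  filter_upwards [hae] with l hl
  have hmemS : ∀ s, (s, l) ∈ S → 0 < l ∧ |r - l| ≤ s ∧ s ≤ σ ∧ s ≤ r + l ∧ 0 < s := by
    rintro s ⟨⟨h1, h2⟩, h3, h4⟩
    simp only at h1 h2 h3 h4
    have := abs_lt.1 h3
    refine ⟨(abs_nonneg _).trans_lt h3, abs_le.2 ⟨?_, ?_⟩, h2, ?_, h1⟩ <;> linarith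
  by_cases hmem : 0 < l ∧ |r - l| ≤ σ
  swap
  · rw [indicator_of_notMem (by exact hmem), lintegral_eq_zero_of_ae_eq_zero]
    refine Filter.Eventually.of_forall fun s => ?_
    refine indicator_of_notMem (fun hs => hmem ?_) _
    obtain ⟨h1, h2, h3, -⟩ := hmemS s hs
    exact ⟨h1, h2.trans h3⟩
  rw [indicator_of_mem (by exact hmem)]
  obtain ⟨hl0, hlσ⟩ := hmem
  have hne : 2 * cosh σ ≠ 2 * cosh (r + l) := by
    intro h
    have h' : cosh σ = cosh (r + l) := by linarith
    have h1 := (cosh_le_cosh).1 h'.le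
    have h2 := (cosh_le_cosh).1 h'.ge
    rw [abs_of_nonneg hσ, abs_of_nonneg (by positivity)] at h1 h2
    exact hl (by linarith)
  set e := min σ (r + l) with he
  set d := |r - l| with hd
  have he0 : 0 ≤ e := le_min hσ (by positivity)
  have hmin : min (2 * cosh σ) (2 * cosh (r + l)) = 2 * cosh e := by
    rcases le_total σ (r + l) with h | h
    · rw [he, min_eq_left h, min_eq_left (two_mul_cosh_mono hσ h)]
    · rw [he, min_eq_right h, min_eq_right (two_mul_cosh_mono (by positivity) h)]
  have hcd : cosh (r - l) = cosh d := (cosh_abs _).symm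
  set k := f l * |2 * cosh σ - 2 * cosh (r + l)| ^ (-(1 / 2) : ℝ) with hk
  have hk0 : 0 ≤ k := mul_nonneg (hf0 l hl0) (rpow_nonneg (abs_nonneg _) _)
  calc ∫⁻ s, G s l
      ≤ ∫⁻ s in Icc d e, ENNReal.ofReal k * ENNReal.ofReal (2 * sinh s *
      ((2 * cosh e - 2 * cosh s) * (2 * cosh s - 2 * cosh d)) ^ (-(1 / 2) : ℝ)) := by
        rw [← lintegral_indicator measurableSet_Icc]
        refine lintegral_mono fun s => ?_
        by_cases hs : (s, l) ∈ S
        swap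
        · simp only [hG, indicator_of_notMem hs]; exact zero_le
        obtain ⟨-, h2, h3, h4, h5⟩ := hmemS s hs
        have hsI : s ∈ Icc d e := ⟨h2, le_min h3 h4⟩
        simp only [hG, indicator_of_mem hs, indicator_of_mem hsI]
        have hA := two_mul_cosh_mono h5.le h3
        have hB := two_mul_cosh_mono h5.le h4
        have hD : 2 * cosh (r - l) ≤ 2 * cosh s := by
          rw [hcd]; exact two_mul_cosh_mono (abs_nonneg _) h2
        have hsh : 0 ≤ sinh s := sinh_nonneg_iff.2 h5.le
        have hf' := hf0 l hl0
        have hFnn : 0 ≤ F s l := by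
          refine mul_nonneg (mul_nonneg hf' (by positivity)) (rpow_nonneg ?_ _)
          exact mul_nonneg (mul_nonneg (by linarith) (by linarith)) (by linarith)
        rw [Real.enorm_of_nonneg hFnn, ← ENNReal.ofReal_mul hk0]
        apply ENNReal.ofReal_le_ofReal
        have := rpow_neg_half_triple_le hA hB hD hne
        rw [hmin, hcd] at this
        calc F s l ≤ f l * (2 * sinh s) * (|2 * cosh σ - 2 * cosh (r + l)| ^ (-(1 / 2) : ℝ) *
              ((2 * cosh e - 2 * cosh s) * (2 * cosh s - 2 * cosh d)) ^ (-(1 / 2) : ℝ)) := by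
              simp only [hF, hcd]
              exact mul_le_mul_of_nonneg_left this (by positivity)
          _ = _ := by rw [hk]; ring
    _ = ENNReal.ofReal k * ∫⁻ s in Ioc d e, ENNReal.ofReal (2 * sinh s *
      ((2 * cosh e - 2 * cosh s) * (2 * cosh s - 2 * cosh d)) ^ (-(1 / 2) : ℝ)) := by
        rw [restrict_Ioc_eq_restrict_Icc, lintegral_const_mul' _ _ ENNReal.ofReal_ne_top]
    _ ≤ ENNReal.ofReal k * ENNReal.ofReal π := by
        gcongr
        exact lintegral_arcsine_cosh_le (abs_nonneg _)

lemma one_le_jap (x : ℝ) : 1 ≤ jap x := by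
  rw [jap, one_le_sqrt]
  nlinarith [sq_nonneg x]

lemma jap_pos (x : ℝ) : 0 < jap x := one_pos.trans_le (one_le_jap x)

lemma jap_le_one_add_abs (x : ℝ) : jap x ≤ 1 + |x| := by
  rw [jap, sqrt_le_left (by positivity)]
  nlinarith [abs_nonneg x, sq_abs x]

lemma abs_le_jap (x : ℝ) : |x| ≤ jap x := by
  rw [jap]
  apply le_sqrt_of_sq_le
  rw [sq_abs]
  linarith

lemma measurable_jap : Measurable jap := by
  unfold jap
  fun_prop

lemma jap_add_le (x y : ℝ) : jap (x + y) ≤ jap x + jap y := by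
  have hx := one_le_jap x
  have hy := one_le_jap y
  have h1 : jap x ^ 2 = 1 + x ^ 2 := sq_sqrt (by positivity)
  have h2 : jap y ^ 2 = 1 + y ^ 2 := sq_sqrt (by positivity)
  have h3 : x * y ≤ jap x * jap y :=
    (le_abs_self _).trans (by
      rw [abs_mul]
      exact mul_le_mul (abs_le_jap x) (abs_le_jap y) (abs_nonneg _) (jap_pos x).le)
  rw [jap, sqrt_le_left (by linarith)]
  nlinarith

/-- Convolution-type splitting of a product of brackets. -/
lemma jap_rpow_mul_jap_rpow_le {h : ℝ} (hh : 0 < h) (T u : ℝ) :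
    jap u ^ (-h) * jap (T - u) ^ (-h) ≤
      2 ^ h * jap T ^ (-h) * (jap u ^ (-h) + jap (T - u) ^ (-h)) := by
  have hT : jap T ≤ jap u + jap (T - u) := by
    simpa using jap_add_le u (T - u)
  have key : ∀ a b : ℝ, 0 < a → 0 < b → jap T ≤ a + b → a ≤ b →
      a ^ (-h) * b ^ (-h) ≤ 2 ^ h * jap T ^ (-h) * (a ^ (-h) + b ^ (-h)) := by
    intro a b ha hb hab hle
    have h1 : b ^ (-h) ≤ 2 ^ h * jap T ^ (-h) := by
      have : b ^ (-h) ≤ (jap T / 2) ^ (-h) :=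
        rpow_le_rpow_of_nonpos (by have := jap_pos T; positivity) (by linarith) (by linarith)
      rw [div_rpow (jap_pos T).le zero_le_two, rpow_neg zero_le_two] at this
      rwa [div_inv_eq_mul, mul_comm] at this
    have ha' : 0 ≤ a ^ (-h) := rpow_nonneg ha.le _
    have hb' : 0 ≤ b ^ (-h) := rpow_nonneg hb.le _
    nlinarith
  rcases le_total (jap u) (jap (T - u)) with h1 | h1
  · exact key _ _ (jap_pos _) (jap_pos _) hT h1
  · have := key _ _ (jap_pos _) (jap_pos _) (by linarith) h1
    rw [mul_comm (jap u ^ (-h)), add_comm (jap u ^ (-h))]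
    exact this

lemma integrable_jap_rpow {h : ℝ} (hh : 1 < h) : Integrable (fun u => jap u ^ (-h)) := by
  have := integrable_rpow_neg_one_add_norm_sq (E := ℝ) (μ := volume) (r := h) (by simpa using hh)
  refine this.congr (Filter.Eventually.of_forall fun u => ?_)
  simp only [jap, norm_eq_abs, sq_abs]
  rw [sqrt_eq_rpow, ← rpow_mul (by positivity)]
  congr 1
  ring

/-- The profile in the characteristic variable that dominates the kernel. -/
noncomputable def profile (δ y : ℝ) : ℝ :=
  |y| ^ (-(1 / 2) : ℝ) * (1 + |y|) ^ (-(1 / 2 + δ))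

lemma profile_nonneg (δ y : ℝ) : 0 ≤ profile δ y := by
  unfold profile; positivity

lemma measurable_profile (δ : ℝ) : Measurable (profile δ) := by
  unfold profile; fun_prop

lemma integrable_profile {δ : ℝ} (hδ : 0 < δ) : Integrable (profile δ) := by
  have h1 : Integrable (fun y : ℝ => 2 * (1 + ‖y‖) ^ (-(1 + δ))) :=
    (integrable_one_add_norm (by simpa using hδ)).const_mul 2
  have h2 : IntegrableOn (fun y : ℝ => |y| ^ (-(1 / 2) : ℝ)) (Ioc (-1) 1) := by
    have hpos : IntegrableOn (fun y : ℝ => |y| ^ (-(1 / 2) : ℝ)) (Ioc 0 1) := by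
      have : IntegrableOn (fun y : ℝ => y ^ (-(1 / 2) : ℝ)) (Ioc 0 1) :=
        (intervalIntegrable_iff_integrableOn_Ioc_of_le zero_le_one).1
          (intervalIntegral.intervalIntegrable_rpow' (by norm_num))
      refine this.congr_fun (fun y hy => ?_) measurableSet_Ioc
      simp only [abs_of_pos hy.1]
    have hneg : IntegrableOn (fun y : ℝ => |y| ^ (-(1 / 2) : ℝ)) (Ioc (-1) 0) := by
      have := hpos.comp_neg
      simp only [abs_neg, neg_Ioc, neg_zero] at this
      rwa [integrableOn_Ioc_iff_integrableOn_Ioo, ← integrableOn_Ico_iff_integrableOn_Ioo]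
    rw [← Ioc_union_Ioc_eq_Ioc (b := 0) (by norm_num) (by norm_num)]
    exact hneg.union hpos
  have h3 := (h2.integrable_indicator measurableSet_Ioc).add h1
  refine h3.mono' (measurable_profile δ).aestronglyMeasurable
    (Filter.Eventually.of_forall fun y => ?_)
  rw [norm_of_nonneg (profile_nonneg δ y)]
  simp only [Pi.add_apply, norm_eq_abs]
  have hn1 : 0 ≤ 2 * (1 + |y|) ^ (-(1 + δ)) := by positivity
  by_cases hy : y ∈ Ioc (-1 : ℝ) 1
  · rw [indicator_of_mem hy]
    have : profile δ y ≤ |y| ^ (-(1 / 2) : ℝ) := by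
      refine mul_le_of_le_one_right (by positivity) ?_
      exact rpow_le_one_of_one_le_of_nonpos (by linarith [abs_nonneg y]) (by linarith)
    linarith
  · rw [indicator_of_notMem hy, zero_add]
    have hy1 : 1 ≤ |y| := by
      by_contra hlt
      exact hy ⟨(abs_lt.1 (not_le.1 hlt)).1, (abs_lt.1 (not_le.1 hlt)).2.le⟩
    have e1 : |y| ^ (-(1 / 2) : ℝ) ≤ 2 * (1 + |y|) ^ (-(1 / 2) : ℝ) := by
      have : |y| ^ (-(1 / 2) : ℝ) ≤ ((1 + |y|) / 4) ^ (-(1 / 2) : ℝ) :=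
        rpow_le_rpow_of_nonpos (by positivity) (by linarith) (by norm_num)
      refine this.trans_eq ?_
      rw [div_rpow (by positivity) (by norm_num), rpow_neg (by norm_num : (0 : ℝ) ≤ 4),
        ← sqrt_eq_rpow, show (4 : ℝ) = 2 ^ 2 by norm_num, sqrt_sq (by norm_num), div_inv_eq_mul,
        mul_comm]
    calc profile δ y ≤ 2 * (1 + |y|) ^ (-(1 / 2) : ℝ) * (1 + |y|) ^ (-(1 / 2 + δ)) := by
          unfold profile; gcongr
      _ = 2 * (1 + |y|) ^ (-(1 + δ)) := by
          rw [mul_assoc, ← rpow_add (by positivity)]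
          congr 2
          ring

/-- Integration in characteristic coordinates. -/
lemma lintegral_lintegral_characteristic (T : ℝ) {g Φ : ℝ → ENNReal} (hg : Measurable g)
    (hΦ : Measurable Φ) :
    ∫⁻ τ, ∫⁻ l, g (τ - l) * Φ ((T - τ - l) / 2) = (∫⁻ u, g u) * ∫⁻ y, Φ y := by
  calc ∫⁻ τ, ∫⁻ l, g (τ - l) * Φ ((T - τ - l) / 2)
      = ∫⁻ τ, ∫⁻ u, g u * Φ ((T + u) / 2 - τ) := by
        refine lintegral_congr fun τ => ?_
        rw [← lintegral_sub_left_eq_self (fun u => g u * Φ ((T + u) / 2 - τ)) τ]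
        refine lintegral_congr fun l => ?_
        congr 2
        ring
    _ = ∫⁻ u, ∫⁻ τ, g u * Φ ((T + u) / 2 - τ) := by
        refine lintegral_lintegral_swap (Measurable.aemeasurable ?_)
        simp only [Function.uncurry_def]
        fun_prop
    _ = ∫⁻ u, g u * ∫⁻ y, Φ y := by
        refine lintegral_congr fun u => ?_
        rw [lintegral_const_mul _ (by fun_prop), lintegral_sub_left_eq_self]
    _ = _ := lintegral_mul_const _ hg

lemma exists_lintegral_characteristic_le {h δ : ℝ} (hh : 1 < h) (hδ : 0 < δ) :
    ∃ C : ℝ, 0 ≤ C ∧ ∀ T : ℝ, ∫⁻ τ, ∫⁻ l, ENNReal.ofReal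
      (jap (τ - l) ^ (-h) * jap (T - (τ - l)) ^ (-h)) *
        ENNReal.ofReal (profile δ ((T - τ - l) / 2)) ≤ ENNReal.ofReal (C * jap T ^ (-h)) := by
  have hj0 : ∀ u, 0 ≤ jap u ^ (-h) := fun u => rpow_nonneg (jap_pos u).le _
  have hI0 : 0 ≤ ∫ u, jap u ^ (-h) := integral_nonneg hj0
  have hP0 : 0 ≤ ∫ y, profile δ y := integral_nonneg (profile_nonneg δ)
  have hm := measurable_jap
  have hJ : ∫⁻ u, ENNReal.ofReal (jap u ^ (-h)) = ENNReal.ofReal (∫ u, jap u ^ (-h)) :=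
    (ofReal_integral_eq_lintegral_ofReal (integrable_jap_rpow hh)
      (Filter.Eventually.of_forall hj0)).symm
  have hP : ∫⁻ y, ENNReal.ofReal (profile δ y) = ENNReal.ofReal (∫ y, profile δ y) :=
    (ofReal_integral_eq_lintegral_ofReal (integrable_profile hδ)
      (Filter.Eventually.of_forall (profile_nonneg δ))).symm
  refine ⟨2 ^ h * (2 * ∫ u, jap u ^ (-h)) * ∫ y, profile δ y, by positivity, fun T => ?_⟩
  rw [lintegral_lintegral_characteristic T
    (g := fun u => ENNReal.ofReal (jap u ^ (-h) * jap (T - u) ^ (-h)))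
    (Φ := fun y => ENNReal.ofReal (profile δ y)) (by fun_prop)
    (measurable_profile δ).ennreal_ofReal, hP]
  have hg : ∫⁻ u, ENNReal.ofReal (jap u ^ (-h) * jap (T - u) ^ (-h)) ≤
      ENNReal.ofReal (2 ^ h * jap T ^ (-h) * (2 * ∫ u, jap u ^ (-h))) := by
    have hc : 0 ≤ 2 ^ h * jap T ^ (-h) := mul_nonneg (by positivity) (hj0 T)
    calc ∫⁻ u, ENNReal.ofReal (jap u ^ (-h) * jap (T - u) ^ (-h))
        ≤ ∫⁻ u, ENNReal.ofReal (2 ^ h * jap T ^ (-h)) *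
            (ENNReal.ofReal (jap u ^ (-h)) + ENNReal.ofReal (jap (T - u) ^ (-h))) := by
          refine lintegral_mono fun u => ?_
          rw [← ENNReal.ofReal_add (hj0 _) (hj0 _), ← ENNReal.ofReal_mul hc]
          exact ENNReal.ofReal_le_ofReal (jap_rpow_mul_jap_rpow_le (by linarith) T u)
      _ = _ := by
          rw [lintegral_const_mul _ (by fun_prop), lintegral_add_left (by fun_prop),
            lintegral_sub_left_eq_self (fun u => ENNReal.ofReal (jap u ^ (-h))) T, hJ,
            ← ENNReal.ofReal_add hI0 hI0, ← ENNReal.ofReal_mul hc, two_mul]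
  calc _ ≤ ENNReal.ofReal (2 ^ h * jap T ^ (-h) * (2 * ∫ u, jap u ^ (-h))) *
        ENNReal.ofReal (∫ y, profile δ y) := by gcongr
    _ = _ := by
        rw [← ENNReal.ofReal_mul' hP0]
        congr 1
        ring

lemma sinh_mul_cosh_le_sinh_add {r l : ℝ} (hr : 0 ≤ r) : sinh l * cosh r ≤ sinh (r + l) := by
  rw [sinh_add]
  nlinarith [mul_nonneg (sinh_nonneg_iff.2 hr) (cosh_pos l).le]

lemma mul_cosh_le_one_add_mul_sinh {y : ℝ} (hy : 0 ≤ y) : y * cosh y ≤ (1 + y) * sinh y := by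
  have h1 := cosh_sub_sinh y
  have h2 : exp (-y) ≤ 1 := exp_le_one_iff.2 (by linarith)
  have h3 := self_le_sinh_iff.2 hy
  nlinarith

/-- Lower bound for the gap above the light cone `σ = r + l`. -/
lemma cosh_gap_of_pos {r l y : ℝ} (hr : 0 < r) (hl : 0 < l) (hy : 0 < y) :
    sinh l * cosh r * (4 * y * cosh y) ≤ |2 * cosh (r + l + 2 * y) - 2 * cosh (r + l)| := by
  refine le_trans ?_ (le_abs_self _)
  have h1 : y ≤ sinh y := self_le_sinh_iff.2 hy.le
  have h2 := sinh_mul_cosh_le_sinh_add (l := l) hr.le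
  have h3 : 0 ≤ sinh (r + l) := sinh_nonneg_iff.2 (by positivity)
  calc sinh l * cosh r * (4 * y * cosh y) ≤ sinh (r + l) * (4 * sinh y * cosh y) := by gcongr
    _ ≤ _ := by
      rw [cosh_add (r + l) (2 * y), cosh_two_mul, sinh_two_mul, cosh_sq]
      nlinarith [mul_nonneg (cosh_pos (r + l)).le (sq_nonneg (sinh y))]

/-- Lower bound for the gap below the light cone `σ = r + l`. -/
lemma cosh_gap_of_neg {r l y : ℝ} (hr : 0 < r) (hl : 0 < l) (hy : 0 < y)
    (hyr : 2 * y ≤ r + l) :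
    sinh l * cosh r * (2 * y / (1 + y)) ≤ |2 * cosh (r + l - 2 * y) - 2 * cosh (r + l)| := by
  rw [abs_sub_comm]
  refine le_trans ?_ (le_abs_self _)
  set X := r + l with hX
  have h2 := sinh_mul_cosh_le_sinh_add (l := l) hr.le
  have hsX : sinh X ≤ 2 * (sinh (X - y) * cosh y) := by
    have e1 : sinh X = sinh (X - y) * cosh y + cosh (X - y) * sinh y := by
      rw [← sinh_add]; ring_nf
    have e2 : sinh (X - y - y) = sinh (X - y) * cosh y - cosh (X - y) * sinh y := sinh_sub _ _
    have e3 : 0 ≤ sinh (X - y - y) := sinh_nonneg_iff.2 (by linarith)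
    linarith
  have hgap : 2 * cosh X - 2 * cosh (X - 2 * y) = 4 * (sinh (X - y) * sinh y) := by
    have e1 : cosh X = cosh (X - y) * cosh y + sinh (X - y) * sinh y := by
      rw [← cosh_add]; ring_nf
    have e2 : cosh (X - 2 * y) = cosh (X - y) * cosh y - sinh (X - y) * sinh y := by
      rw [← cosh_sub]; ring_nf
    rw [e1, e2]; ring
  have hs0 : 0 ≤ sinh (X - y) := sinh_nonneg_iff.2 (by linarith)
  have h3 := mul_cosh_le_one_add_mul_sinh hy.le
  rw [hgap, ← mul_div_assoc, div_le_iff₀ (by positivity)]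
  calc sinh l * cosh r * (2 * y) ≤ sinh X * (2 * y) := by gcongr
    _ ≤ 2 * (sinh (X - y) * cosh y) * (2 * y) := by gcongr
    _ = 4 * sinh (X - y) * (y * cosh y) := by ring
    _ ≤ 4 * sinh (X - y) * ((1 + y) * sinh y) := by gcongr
    _ = _ := by ring

lemma sinh_mul_rpow_gap_le {r l m G : ℝ} (hl : 0 < l) (hm : 0 < m)
    (hG : sinh l * cosh r * m ≤ G) :
    sinh l * cosh l ^ (-(1 / 2) : ℝ) * G ^ (-(1 / 2) : ℝ) ≤
      cosh r ^ (-(1 / 2) : ℝ) * m ^ (-(1 / 2) : ℝ) := by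
  have hs : 0 < sinh l := sinh_pos_iff.2 hl
  have hc := cosh_pos l
  have hr := cosh_pos r
  have h1 : G ^ (-(1 / 2) : ℝ) ≤ (sinh l * cosh r * m) ^ (-(1 / 2) : ℝ) :=
    rpow_le_rpow_of_nonpos (by positivity) hG (by norm_num)
  rw [mul_rpow (by positivity) hm.le, mul_rpow hs.le hr.le] at h1
  have h2 : sinh l * cosh l ^ (-(1 / 2) : ℝ) * sinh l ^ (-(1 / 2) : ℝ) ≤ 1 := by
    have : cosh l ^ (-(1 / 2) : ℝ) ≤ sinh l ^ (-(1 / 2) : ℝ) :=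
      rpow_le_rpow_of_nonpos hs (sinh_lt_cosh l).le (by norm_num)
    calc sinh l * cosh l ^ (-(1 / 2) : ℝ) * sinh l ^ (-(1 / 2) : ℝ)
        ≤ sinh l * sinh l ^ (-(1 / 2) : ℝ) * sinh l ^ (-(1 / 2) : ℝ) := by gcongr
      _ = 1 := by
        rw [mul_assoc, ← rpow_add hs]
        norm_num [rpow_neg_one, hs.ne']
  calc _ ≤ sinh l * cosh l ^ (-(1 / 2) : ℝ) *
        (sinh l ^ (-(1 / 2) : ℝ) * cosh r ^ (-(1 / 2) : ℝ) * m ^ (-(1 / 2) : ℝ)) := by gcongr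
    _ = (sinh l * cosh l ^ (-(1 / 2) : ℝ) * sinh l ^ (-(1 / 2) : ℝ)) *
        (cosh r ^ (-(1 / 2) : ℝ) * m ^ (-(1 / 2) : ℝ)) := by ring
    _ ≤ _ := mul_le_of_le_one_left (by positivity) h2

lemma one_add_rpow_le_cosh {a y : ℝ} (ha : 0 < a) (hy : 0 ≤ y) :
    (1 + y) ^ a ≤ 2 * a ^ a * exp 1 * cosh y := by
  have h1 : (1 + y) / a ≤ exp ((1 + y) / a) := by
    linarith [add_one_le_exp ((1 + y) / a)]
  have h2 : ((1 + y) / a) ^ a ≤ exp (1 + y) := by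
    calc _ ≤ exp ((1 + y) / a) ^ a := rpow_le_rpow (by positivity) h1 ha.le
      _ = exp (1 + y) := by rw [← exp_mul]; congr 1; field_simp
  rw [div_rpow (by positivity) ha.le, div_le_iff₀ (by positivity), exp_add] at h2
  have h3 : exp y ≤ 2 * cosh y := by
    rw [cosh_eq]; linarith [exp_pos (-y)]
  calc (1 + y) ^ a ≤ exp 1 * exp y * a ^ a := h2
    _ ≤ exp 1 * (2 * cosh y) * a ^ a := by gcongr
    _ = _ := by ring

lemma jap_rpow_neg_ge {h x b : ℝ} (hh : 0 ≤ h) (hb : |x| + 1 ≤ b) :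
    b ^ (-h) ≤ jap x ^ (-h) :=
  rpow_le_rpow_of_nonpos (jap_pos x) (by linarith [jap_le_one_add_abs x]) (by linarith)

lemma decay_above_cone {h δ : ℝ} (hh : 0 < h) (hδ : 0 < δ) :
    ∃ C : ℝ, 0 ≤ C ∧ ∀ l y : ℝ, 0 < l → 0 < y →
      (1 + l) ^ (-(h + 1 + δ)) * (4 * y * cosh y) ^ (-(1 / 2) : ℝ) ≤
        C * jap (2 * y + 2 * l) ^ (-h) * profile δ y := by
  set a := 2 * (h + (1 / 2 + δ)) with ha
  have ha0 : 0 < a := by positivity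
  set K := 2 * a ^ a * exp 1 with hK
  have hK0 : 0 < K := by positivity
  refine ⟨2 ^ h * K ^ (1 / 2 : ℝ), by positivity, fun l y hl hy => ?_⟩
  have h1 : (1 + l) ^ (-(h + 1 + δ)) ≤ (1 + l) ^ (-h) :=
    rpow_le_rpow_of_exponent_le (by linarith) (by linarith)
  have h2 : (2 * ((1 + y) * (1 + l))) ^ (-h) ≤ jap (2 * y + 2 * l) ^ (-h) := by
    refine jap_rpow_neg_ge hh.le ?_
    rw [abs_of_pos (by positivity)]
    nlinarith [mul_pos hl hy]
  rw [mul_rpow (by norm_num) (by positivity), mul_rpow (by positivity) (by positivity),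
    rpow_neg zero_le_two] at h2
  have h3 : (4 * y * cosh y) ^ (-(1 / 2) : ℝ) ≤
      y ^ (-(1 / 2) : ℝ) * (K ^ (1 / 2 : ℝ) * (1 + y) ^ (-(h + (1 / 2 + δ)))) := by
    have hle : y * ((1 + y) ^ a / K) ≤ 4 * y * cosh y := by
      have := one_add_rpow_le_cosh ha0 hy.le
      have h' : (1 + y) ^ a / K ≤ cosh y := by
        rw [div_le_iff₀ hK0, mul_comm]; exact this
      nlinarith [cosh_pos y, mul_pos hy (cosh_pos y)]
    refine (rpow_le_rpow_of_nonpos (by positivity) hle (by norm_num)).trans_eq ?_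
    rw [mul_rpow hy.le (by positivity), div_rpow (by positivity) hK0.le, ← rpow_mul (by positivity),
      rpow_neg hK0.le, div_inv_eq_mul]
    congr 1
    rw [mul_comm]
    congr 2
    rw [ha]; ring
  have hp : profile δ y = y ^ (-(1 / 2) : ℝ) * (1 + y) ^ (-(1 / 2 + δ)) := by
    rw [profile, abs_of_pos hy]
  have hsplit : (1 + y) ^ (-(h + (1 / 2 + δ))) = (1 + y) ^ (-h) * (1 + y) ^ (-(1 / 2 + δ)) := by
    rw [← rpow_add (by positivity)]; congr 1; ring
  have h2' : (1 + y) ^ (-h) * (1 + l) ^ (-h) ≤ 2 ^ h * jap (2 * y + 2 * l) ^ (-h) := by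
    rwa [inv_mul_le_iff₀ (by positivity)] at h2
  calc _ ≤ (1 + l) ^ (-h) * (y ^ (-(1 / 2) : ℝ) *
        (K ^ (1 / 2 : ℝ) * (1 + y) ^ (-(h + (1 / 2 + δ))))) := by gcongr
    _ = ((1 + y) ^ (-h) * (1 + l) ^ (-h)) * (K ^ (1 / 2 : ℝ) * profile δ y) := by
      rw [hsplit, hp]; ring
    _ ≤ (2 ^ h * jap (2 * y + 2 * l) ^ (-h)) * (K ^ (1 / 2 : ℝ) * profile δ y) := by
      have := profile_nonneg δ y
      gcongr
    _ = _ := by ring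

lemma decay_below_cone {h δ l y : ℝ} (hh : 0 < h) (hδ : 0 < δ) (hy : 0 < y) (hyl : y ≤ l) :
    (1 + l) ^ (-(h + 1 + δ)) * (2 * y / (1 + y)) ^ (-(1 / 2) : ℝ) ≤
      2 ^ h * jap (2 * -y + 2 * l) ^ (-h) * profile δ (-y) := by
  have hl : 0 < l := hy.trans_le hyl
  have h1 : (1 + l) ^ (-(h + 1 + δ)) ≤ (1 + l) ^ (-h) * (1 + y) ^ (-(1 + δ)) := by
    have : (1 + l) ^ (-(1 + δ)) ≤ (1 + y) ^ (-(1 + δ)) :=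
      rpow_le_rpow_of_nonpos (by positivity) (by linarith) (by linarith)
    calc _ = (1 + l) ^ (-h) * (1 + l) ^ (-(1 + δ)) := by
          rw [← rpow_add (by positivity)]; congr 1; ring
      _ ≤ _ := by gcongr
  have h2 : (2 * (1 + l)) ^ (-h) ≤ jap (2 * -y + 2 * l) ^ (-h) := by
    refine jap_rpow_neg_ge hh.le ?_
    rw [abs_of_nonneg (by linarith)]
    linarith
  rw [mul_rpow (by norm_num) (by positivity), rpow_neg zero_le_two,
    inv_mul_le_iff₀ (by positivity)] at h2
  have h3 : (2 * y / (1 + y)) ^ (-(1 / 2) : ℝ) ≤ y ^ (-(1 / 2) : ℝ) * (1 + y) ^ (1 / 2 : ℝ) := by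
    have hle : y / (1 + y) ≤ 2 * y / (1 + y) := by gcongr; linarith
    refine (rpow_le_rpow_of_nonpos (by positivity) hle (by norm_num)).trans_eq ?_
    rw [div_rpow hy.le (by positivity), rpow_neg (by positivity : 0 ≤ 1 + y), div_inv_eq_mul]
  have hp : profile δ (-y) =
      (1 + y) ^ (-(1 + δ)) * (y ^ (-(1 / 2) : ℝ) * (1 + y) ^ (1 / 2 : ℝ)) := by
    rw [profile, abs_neg, abs_of_pos hy, mul_left_comm, ← rpow_add (by positivity)]
    congr 2
    ring
  calc _ ≤ ((1 + l) ^ (-h) * (1 + y) ^ (-(1 + δ))) *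
        (y ^ (-(1 / 2) : ℝ) * (1 + y) ^ (1 / 2 : ℝ)) := by gcongr
    _ = (1 + l) ^ (-h) * profile δ (-y) := by rw [hp]; ring
    _ ≤ _ := by
      have := profile_nonneg δ (-y)
      gcongr

/-- Pointwise domination of the weighted kernel by a product in characteristic coordinates. -/
lemma exists_kernel_le {h δ : ℝ} (hh : 0 < h) (hδ : 0 < δ) :
    ∃ C : ℝ, 0 ≤ C ∧ ∀ r l σ : ℝ, 0 < r → 0 < l → |r - l| ≤ σ →
      (1 + l) ^ (-(h + 1 + δ)) * (sinh l * cosh l ^ (-(1 / 2) : ℝ) *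
        |2 * cosh σ - 2 * cosh (r + l)| ^ (-(1 / 2) : ℝ)) ≤
      C * cosh r ^ (-(1 / 2) : ℝ) *
        (jap (σ - r + l) ^ (-h) * profile δ ((σ - r - l) / 2)) := by
  obtain ⟨C, hC0, hC⟩ := decay_above_cone hh hδ
  refine ⟨max C (2 ^ h), le_max_of_le_left hC0, fun r l σ hr hl hσ => ?_⟩
  have hmain : ∀ K m : ℝ, 0 < m → K ≤ max C (2 ^ h) →
      sinh l * cosh r * m ≤ |2 * cosh σ - 2 * cosh (r + l)| →
      (1 + l) ^ (-(h + 1 + δ)) * m ^ (-(1 / 2) : ℝ) ≤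
        K * jap (σ - r + l) ^ (-h) * profile δ ((σ - r - l) / 2) →
      (1 + l) ^ (-(h + 1 + δ)) * (sinh l * cosh l ^ (-(1 / 2) : ℝ) *
        |2 * cosh σ - 2 * cosh (r + l)| ^ (-(1 / 2) : ℝ)) ≤
      max C (2 ^ h) * cosh r ^ (-(1 / 2) : ℝ) *
        (jap (σ - r + l) ^ (-h) * profile δ ((σ - r - l) / 2)) := by
    intro K m hm hK hG hdec
    have hp := profile_nonneg δ ((σ - r - l) / 2)
    have hj : 0 ≤ jap (σ - r + l) ^ (-h) := rpow_nonneg (jap_pos _).le _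
    have hc : 0 ≤ cosh r ^ (-(1 / 2) : ℝ) := rpow_nonneg (cosh_pos r).le _
    calc _ ≤ (1 + l) ^ (-(h + 1 + δ)) * (cosh r ^ (-(1 / 2) : ℝ) * m ^ (-(1 / 2) : ℝ)) :=
          mul_le_mul_of_nonneg_left (sinh_mul_rpow_gap_le hl hm hG) (by positivity)
      _ = cosh r ^ (-(1 / 2) : ℝ) * ((1 + l) ^ (-(h + 1 + δ)) * m ^ (-(1 / 2) : ℝ)) := by ring
      _ ≤ cosh r ^ (-(1 / 2) : ℝ) *
          (K * jap (σ - r + l) ^ (-h) * profile δ ((σ - r - l) / 2)) := by gcongr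
      _ ≤ cosh r ^ (-(1 / 2) : ℝ) *
          (max C (2 ^ h) * jap (σ - r + l) ^ (-h) * profile δ ((σ - r - l) / 2)) := by gcongr
      _ = _ := by ring
  rcases lt_trichotomy σ (r + l) with hlt | heq | hgt
  · obtain ⟨y, rfl⟩ : ∃ y, σ = r + l - 2 * y := ⟨(r + l - σ) / 2, by ring⟩
    have hy : 0 < y := by linarith
    have hσ' := abs_le.1 hσ
    refine hmain (2 ^ h) (2 * y / (1 + y)) (by positivity) (le_max_right _ _)
      (cosh_gap_of_neg hr hl hy (by linarith)) ?_
    have := decay_below_cone hh hδ hy (show y ≤ l by linarith)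
    rw [show r + l - 2 * y - r + l = 2 * -y + 2 * l by ring,
      show (r + l - 2 * y - r - l) / 2 = -y by ring]
    exact this
  · rw [heq, sub_self, abs_zero, zero_rpow (by norm_num), mul_zero, mul_zero]
    have hp := profile_nonneg δ ((r + l - r - l) / 2)
    have hj : 0 ≤ jap (r + l - r + l) ^ (-h) := rpow_nonneg (jap_pos _).le _
    have hc : 0 ≤ cosh r ^ (-(1 / 2) : ℝ) := rpow_nonneg (cosh_pos r).le _
    positivity
  · obtain ⟨y, rfl⟩ : ∃ y, σ = r + l + 2 * y := ⟨(σ - r - l) / 2, by ring⟩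
    have hy : 0 < y := by linarith
    refine hmain C (4 * y * cosh y) (mul_pos (by positivity) (cosh_pos y)) (le_max_left _ _)
      (cosh_gap_of_pos hr hl hy) ?_
    have := hC l y hl hy
    rw [show r + l + 2 * y - r + l = 2 * y + 2 * l by ring,
      show (r + l + 2 * y - r - l) / 2 = y by ring]
    exact this

lemma add_rpow_le_rpow_mul {p h δ L l : ℝ} (hδ : 0 < δ) (hh : 0 < h) (hp : p - 1 = δ + (h + 1 + δ))
    (hL : 1 ≤ L) (hl : 0 < l) :
    (L + l) ^ (1 - p) ≤ L ^ (-δ) * (1 + l) ^ (-(h + 1 + δ)) := by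
  rw [show 1 - p = -δ + -(h + 1 + δ) by linarith, rpow_add (by positivity)]
  have h1 : (L + l) ^ (-δ) ≤ L ^ (-δ) :=
    rpow_le_rpow_of_nonpos (by positivity) (by linarith) (by linarith)
  have h2 : (L + l) ^ (-(h + 1 + δ)) ≤ (1 + l) ^ (-(h + 1 + δ)) :=
    rpow_le_rpow_of_nonpos (by positivity) (by linarith) (by linarith)
  gcongr

/-- The Duhamel term is bounded with a quantitative gain `L ^ (-δ)`. -/
lemma exists_duhamel_le {p h δ : ℝ} (hh : 1 < h) (hδ : 0 < δ) (hp : p - 1 = δ + (h + 1 + δ)) :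
    ∃ C : ℝ, ∀ L : ℝ, 1 ≤ L → ∀ t : ℝ, 0 ≤ t → ∀ r : ℝ, 0 < r →
      (∫ τ in (0 : ℝ)..t, Wker (t - τ) r (fun l =>
        (L + l) ^ (1 - p) * jap (τ - l) ^ (-h) * sinh l * cosh l ^ (-(1 / 2) : ℝ))) ≤
      C * L ^ (-δ) * (cosh r ^ (-(1 / 2) : ℝ) * jap (t - r) ^ (-h)) := by
  have hh0 : 0 < h := by linarith
  obtain ⟨C₁, hC₁, hker⟩ := exists_kernel_le hh0 hδ
  obtain ⟨C₂, hC₂, hchar⟩ := exists_lintegral_characteristic_le hh hδ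
  refine ⟨C₁ * π * C₂, fun L hL t ht r hr => ?_⟩
  have hm := measurable_jap
  have hj0 : ∀ u, 0 ≤ jap u ^ (-h) := fun u => rpow_nonneg (jap_pos u).le _
  have hL0 : 0 ≤ L ^ (-δ) := rpow_nonneg (by linarith) _
  have hr0 : 0 ≤ cosh r ^ (-(1 / 2) : ℝ) := rpow_nonneg (cosh_pos r).le _
  set M := C₁ * L ^ (-δ) * cosh r ^ (-(1 / 2) : ℝ) * π with hM
  have hM0 : 0 ≤ M := by positivity
  have hbound : ∀ τ ∈ Ioc 0 t, ‖Wker (t - τ) r (fun l =>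
      (L + l) ^ (1 - p) * jap (τ - l) ^ (-h) * sinh l * cosh l ^ (-(1 / 2) : ℝ))‖ₑ ≤
      ENNReal.ofReal M * ∫⁻ l, ENNReal.ofReal (jap (τ - l) ^ (-h) *
        jap (t - r - (τ - l)) ^ (-h)) * ENNReal.ofReal (profile δ ((t - r - τ - l) / 2)) := by
    intro τ hτ
    refine (enorm_Wker_le (by linarith [hτ.2]) hr (by fun_prop) (fun l hl => ?_)).trans ?_
    · have := hj0 (τ - l)
      have := (sinh_pos_iff.2 hl).le
      have := (cosh_pos l).le
      have : 0 ≤ L + l := by linarith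
      positivity
    rw [← lintegral_const_mul' _ _ ENNReal.ofReal_ne_top]
    refine lintegral_mono fun l => ?_
    by_cases hl : l ∈ {l | 0 < l ∧ |r - l| ≤ t - τ}
    swap
    · rw [indicator_of_notMem hl]; exact zero_le
    rw [indicator_of_mem hl]
    have hprof := profile_nonneg δ ((t - r - τ - l) / 2)
    have hju := hj0 (τ - l)
    have hjw := hj0 (t - r - (τ - l))
    rw [← ENNReal.ofReal_mul' pi_pos.le, ← ENNReal.ofReal_mul (by positivity),
      ← ENNReal.ofReal_mul hM0]
    apply ENNReal.ofReal_le_ofReal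
    have hk := hker r l (t - τ) hr hl.1 hl.2
    rw [show t - τ - r + l = t - r - (τ - l) by ring, show t - τ - r - l = t - r - τ - l by ring]
      at hk
    have hLl := add_rpow_le_rpow_mul hδ hh0 hp hL hl.1
    set E := sinh l * cosh l ^ (-(1 / 2) : ℝ) *
      |2 * cosh (t - τ) - 2 * cosh (r + l)| ^ (-(1 / 2) : ℝ) with hE
    have hE0 : 0 ≤ E := by
      have := (sinh_pos_iff.2 hl.1).le
      have := (cosh_pos l).le
      positivity
    calc _ = (L + l) ^ (1 - p) * (jap (τ - l) ^ (-h) * E * π) := by rw [hE]; ring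
      _ ≤ L ^ (-δ) * (1 + l) ^ (-(h + 1 + δ)) * (jap (τ - l) ^ (-h) * E * π) := by gcongr
      _ = L ^ (-δ) * jap (τ - l) ^ (-h) * π * ((1 + l) ^ (-(h + 1 + δ)) * E) := by ring
      _ ≤ L ^ (-δ) * jap (τ - l) ^ (-h) * π * (C₁ * cosh r ^ (-(1 / 2) : ℝ) *
          (jap (t - r - (τ - l)) ^ (-h) * profile δ ((t - r - τ - l) / 2))) := by gcongr
      _ = _ := by rw [hM]; ring
  have hfin : ‖∫ τ in (0 : ℝ)..t, Wker (t - τ) r (fun l =>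
      (L + l) ^ (1 - p) * jap (τ - l) ^ (-h) * sinh l * cosh l ^ (-(1 / 2) : ℝ))‖ₑ ≤
      ENNReal.ofReal (M * (C₂ * jap (t - r) ^ (-h))) := by
    refine (enorm_intervalIntegral_le ht _).trans ?_
    refine (setLIntegral_mono' measurableSet_Ioc hbound).trans ?_
    refine (setLIntegral_le_lintegral _ _).trans ?_
    rw [lintegral_const_mul' _ _ ENNReal.ofReal_ne_top, ENNReal.ofReal_mul hM0]
    gcongr
    exact hchar (t - r)
  rw [← ofReal_norm, ENNReal.ofReal_le_ofReal_iff
    (mul_nonneg hM0 (mul_nonneg hC₂ (hj0 _)))] at hfin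
  refine (le_abs_self _).trans (hfin.trans_eq ?_)
  rw [hM]; ring

theorem key_nonlinear_estimate (p h : ℝ) (hp : 3 < p) (hh1 : 1 < h) (hh2 : h < p - 2) :
    ∀ c : ℝ, 0 < c → ∃ L₀ : ℝ, 1 ≤ L₀ ∧ ∀ L : ℝ, L₀ ≤ L →
      ∀ t : ℝ, 0 ≤ t → ∀ r : ℝ, 0 < r →
        (∫ τ in (0 : ℝ)..t,
          Wker (t - τ) r (fun l =>
            (L + l) ^ (1 - p) * jap (τ - l) ^ (-h) * Real.sinh l *
              Real.cosh l ^ (-(1 / 2) : ℝ)))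
        ≤ c * Real.cosh r ^ (-(1 / 2) : ℝ) * jap (t - r) ^ (-h) := by
  intro c hc
  have hδ : 0 < (p - 2 - h) / 2 := by linarith
  obtain ⟨C, hC⟩ := exists_duhamel_le (p := p) hh1 hδ (by ring)
  have hlim : Filter.Tendsto (fun L : ℝ => C * L ^ (-((p - 2 - h) / 2))) Filter.atTop (nhds 0) := by
    simpa using (tendsto_rpow_neg_atTop hδ).const_mul C
  obtain ⟨L₁, hL₁⟩ := Filter.eventually_atTop.1 (hlim.eventually_le_const hc)
  refine ⟨max 1 L₁, le_max_left _ _, fun L hL t ht r hr => ?_⟩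
  refine (hC L ((le_max_left _ _).trans hL) t ht r hr).trans ?_
  rw [mul_assoc c]
  refine mul_le_mul_of_nonneg_right (hL₁ L ((le_max_right _ _).trans hL)) ?_
  exact mul_nonneg (rpow_nonneg (cosh_pos r).le _) (rpow_nonneg (jap_pos _).le _)
end

section
/- Let p > 3 and h > 1. There exists a constant C > 0, depending only on p and h, such that for all L ≥ 1 and all 0 ≤ t ≤ r: ∫_0^t ∫_{r−(t−τ)}^{r+(t−τ)} (L+λ)^{1−p} ⟨τ−λ⟩^{−h} dλ dτ ≤ C (L + r − t)^{2−p}. -/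
open MeasureTheory intervalIntegral

lemma jap_rpow_neg_pos (h x : ℝ) : 0 < jap x ^ (-h) :=
  Real.rpow_pos_of_pos (Real.sqrt_pos.2 (by positivity)) _

lemma integrable_jap_rpow_neg {h : ℝ} (hh : 1 < h) : Integrable fun x => jap x ^ (-h) := by
  have key := integrable_rpow_neg_one_add_norm_sq (E := ℝ) (μ := volume) (r := h)
    (by simpa using hh)
  refine key.congr (Filter.Eventually.of_forall fun x => ?_)
  simp only [jap, Real.sqrt_eq_rpow, Real.norm_eq_abs, sq_abs]
  rw [← Real.rpow_mul (by positivity)]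
  ring_nf

/-- The weight `(L + l) ^ (1 - p)` is largest at the left endpoint, and the bracket is integrable. -/
lemma integral_mul_jap_le {p h L τ a b : ℝ} (hp : 1 ≤ p) (hh : 1 < h) (hL : 0 < L + a)
    (hab : a ≤ b) :
    ∫ l in a..b, (L + l) ^ (1 - p) * jap (τ - l) ^ (-h)
      ≤ (L + a) ^ (1 - p) * ∫ x, jap x ^ (-h) := by
  have hint : Integrable fun l => jap (τ - l) ^ (-h) :=
    (integrable_jap_rpow_neg hh).comp_sub_left τ
  calc ∫ l in a..b, (L + l) ^ (1 - p) * jap (τ - l) ^ (-h)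
      = ∫ l in Set.Ioc a b, (L + l) ^ (1 - p) * jap (τ - l) ^ (-h) := integral_of_le hab
    _ ≤ ∫ l in Set.Ioc a b, (L + a) ^ (1 - p) * jap (τ - l) ^ (-h) := by
        refine integral_mono_of_nonneg ?_ (hint.const_mul _).integrableOn ?_ <;>
          filter_upwards [ae_restrict_mem measurableSet_Ioc] with l hl
        · exact mul_nonneg (Real.rpow_nonneg (by linarith [hl.1]) _) (jap_rpow_neg_pos _ _).le
        · exact mul_le_mul_of_nonneg_right
            (Real.rpow_le_rpow_of_nonpos hL (by linarith [hl.1]) (by linarith))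
            (jap_rpow_neg_pos _ _).le
    _ ≤ ∫ l, (L + a) ^ (1 - p) * jap (τ - l) ^ (-h) :=
        setIntegral_le_integral (hint.const_mul _) (Filter.Eventually.of_forall fun l =>
          mul_nonneg (Real.rpow_nonneg hL.le _) (jap_rpow_neg_pos _ _).le)
    _ = (L + a) ^ (1 - p) * ∫ x, jap x ^ (-h) := by
        rw [MeasureTheory.integral_const_mul,
          integral_sub_left_eq_self (fun x => jap x ^ (-h)) volume τ]

lemma intervalIntegrable_add_rpow {A t q : ℝ} (hA : 0 < A) (ht : 0 ≤ t) :
    IntervalIntegrable (fun τ => (A + τ) ^ q) volume 0 t := by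
  refine ContinuousOn.intervalIntegrable fun τ hτ => ContinuousAt.continuousWithinAt ?_
  rw [Set.uIcc_of_le ht] at hτ
  exact ContinuousAt.rpow_const (by fun_prop) (Or.inl (by linarith [hτ.1]))

lemma integral_add_rpow_le {A t p : ℝ} (hA : 0 < A) (ht : 0 ≤ t) (hp : 2 < p) :
    ∫ τ in (0 : ℝ)..t, (A + τ) ^ (1 - p) ≤ A ^ (2 - p) / (p - 2) := by
  rw [integral_comp_add_left (fun x => x ^ (1 - p)) A, integral_rpow]
  · have hpos : 0 ≤ (A + t) ^ (2 - p) := Real.rpow_nonneg (by linarith) _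
    rw [show 1 - p + 1 = 2 - p by ring, add_zero, ← neg_div_neg_eq, neg_sub, neg_sub]
    gcongr
    · linarith
  · refine Or.inr ⟨by linarith, ?_⟩
    rw [Set.uIcc_of_le (by linarith)]
    exact fun h0 => by linarith [h0.1]

theorem exterior_region_estimate (p h : ℝ) (hp : 3 < p) (hh : 1 < h) :
    ∃ C : ℝ, 0 < C ∧ ∀ L : ℝ, 1 ≤ L → ∀ t r : ℝ, 0 ≤ t → t ≤ r →
      (∫ τ in (0 : ℝ)..t, ∫ l in (r - (t - τ))..(r + (t - τ)),
        (L + l) ^ (1 - p) * jap (τ - l) ^ (-h))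
      ≤ C * (L + r - t) ^ (2 - p) := by
  set J := ∫ x, jap x ^ (-h)
  have hJ0 : 0 ≤ J := integral_nonneg fun x => (jap_rpow_neg_pos h x).le
  refine ⟨(J + 1) / (p - 2), div_pos (by linarith) (by linarith), fun L hL t r ht hr => ?_⟩
  have hA : 0 < L + r - t := by linarith
  calc (∫ τ in (0 : ℝ)..t, ∫ l in (r - (t - τ))..(r + (t - τ)),
        (L + l) ^ (1 - p) * jap (τ - l) ^ (-h))
      ≤ ∫ τ in (0 : ℝ)..t, (L + r - t + τ) ^ (1 - p) * J := by
        rw [integral_of_le ht, integral_of_le ht]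
        refine integral_mono_of_nonneg ?_
          ((intervalIntegrable_add_rpow hA ht).mul_const J).1 ?_ <;>
          filter_upwards [ae_restrict_mem measurableSet_Ioc] with τ hτ
        · refine integral_nonneg (by linarith [hτ.2]) fun l hl => ?_
          exact mul_nonneg (Real.rpow_nonneg (by linarith [hl.1, hτ.1]) _)
            (jap_rpow_neg_pos _ _).le
        · refine (integral_mul_jap_le (by linarith) hh (by linarith [hτ.1])
            (by linarith [hτ.2])).trans_eq ?_
          rw [show L + (r - (t - τ)) = L + r - t + τ by ring]
    _ = (∫ τ in (0 : ℝ)..t, (L + r - t + τ) ^ (1 - p)) * J := integral_mul_const _ _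
    _ ≤ (L + r - t) ^ (2 - p) / (p - 2) * (J + 1) := by
        have hpos : 0 ≤ (L + r - t) ^ (2 - p) / (p - 2) :=
          div_nonneg (Real.rpow_nonneg hA.le _) (by linarith)
        exact mul_le_mul (integral_add_rpow_le hA ht (by linarith)) (by linarith) hJ0 hpos
    _ = (J + 1) / (p - 2) * (L + r - t) ^ (2 - p) := by ring
end

section
/- Let q > 1, 0 < c ≤ 4 and D₀ > 0, and let (D_m)_{m≥0} be a sequence of positive reals satisfying D_{m+1} ≥ c D_m^q / (4 (m+1)² q^{2m}) for all m ≥ 0. Then the series Σ_{j=0}^{∞} (2 ln(j+1) + 2j ln q − ln(c/4)) / q^{j+1} converges, and with E = ln D₀ − Σ_{j=0}^{∞} (2 ln(j+1) + 2j ln q − ln(c/4)) / q^{j+1}, one has D_m ≥ exp(E q^m) for every m ≥ 0. -/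
/-- Summability of the logarithmic losses accumulated along the iteration. -/
lemma summable_log_add_linear_div_pow {q : ℝ} (hq : 1 < q) (a b : ℝ) :
    Summable (fun j : ℕ => (2 * Real.log ((j : ℝ) + 1) + a * (j : ℝ) - b) / q ^ (j + 1)) := by
  have hq0 : 0 < q := by linarith
  have hr : ‖q⁻¹‖ < 1 := by
    rw [Real.norm_of_nonneg (by positivity)]
    exact inv_lt_one_of_one_lt₀ hq
  have hlin := summable_pow_mul_geometric_of_norm_lt_one 1 hr
  have hgeom := summable_geometric_of_norm_lt_one hr
  have hlog : Summable (fun j : ℕ => Real.log ((j : ℝ) + 1) * q⁻¹ ^ j) := by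
    refine Summable.of_nonneg_of_le (fun j => ?_) (fun j => ?_) hlin
    · have : 0 ≤ Real.log ((j : ℝ) + 1) :=
        Real.log_nonneg (le_add_of_nonneg_left (Nat.cast_nonneg j))
      positivity
    · have : Real.log ((j : ℝ) + 1) ≤ (j : ℝ) ^ 1 := by
        linarith [Real.log_le_sub_one_of_pos (Nat.cast_add_one_pos (α := ℝ) j)]
      gcongr
  refine (((hlog.mul_left (2 / q)).add (hlin.mul_left (a / q))).sub
    (hgeom.mul_left (b / q))).congr fun j => ?_
  rw [inv_pow]
  field_simp
  ring

/-- A discrete Grönwall inequality for `L (m + 1) ≥ q * L m - a m`. -/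
lemma le_of_affine_recursion {q : ℝ} (hq : 0 < q) {L a : ℕ → ℝ} (ha : ∀ m, 0 ≤ a m)
    (hs : Summable fun j => a j / q ^ (j + 1)) (hL : ∀ m, q * L m - a m ≤ L (m + 1)) (m : ℕ) :
    (L 0 - ∑' j, a j / q ^ (j + 1)) * q ^ m ≤ L m := by
  have hfin : (L 0 - ∑ j ∈ Finset.range m, a j / q ^ (j + 1)) * q ^ m ≤ L m := by
    induction m with
    | zero => simp
    | succ m ih =>
      calc (L 0 - ∑ j ∈ Finset.range (m + 1), a j / q ^ (j + 1)) * q ^ (m + 1)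
          = q * ((L 0 - ∑ j ∈ Finset.range m, a j / q ^ (j + 1)) * q ^ m) - a m := by
            rw [Finset.sum_range_succ, ← sub_sub, sub_mul _ (a m / _),
              div_mul_cancel₀ _ (by positivity)]
            ring
        _ ≤ q * L m - a m := by gcongr
        _ ≤ L (m + 1) := hL m
  refine le_trans ?_ hfin
  gcongr
  exact hs.sum_le_tsum _ fun j _ => div_nonneg (ha j) (by positivity)

theorem john_iteration_lemma (q c : ℝ) (hq : 1 < q) (hc0 : 0 < c) (hc4 : c ≤ 4)
    (D : ℕ → ℝ) (hDpos : ∀ m, 0 < D m)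
    (hrec : ∀ m : ℕ, D (m + 1) ≥ c * D m ^ q / (4 * ((m : ℝ) + 1) ^ 2 * q ^ (2 * m))) :
    Summable (fun j : ℕ =>
      (2 * Real.log ((j : ℝ) + 1) + 2 * (j : ℝ) * Real.log q - Real.log (c / 4))
        / q ^ (j + 1)) ∧
    ∀ m : ℕ, D m ≥ Real.exp
      ((Real.log (D 0) - ∑' j : ℕ,
          (2 * Real.log ((j : ℝ) + 1) + 2 * (j : ℝ) * Real.log q - Real.log (c / 4))
            / q ^ (j + 1)) * q ^ m) := by
  have hq0 : 0 < q := by linarith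
  have hs : Summable (fun j : ℕ =>
      (2 * Real.log ((j : ℝ) + 1) + 2 * (j : ℝ) * Real.log q - Real.log (c / 4))
        / q ^ (j + 1)) :=
    (summable_log_add_linear_div_pow hq (2 * Real.log q) (Real.log (c / 4))).congr
      fun j => by ring
  refine ⟨hs, fun m => ?_⟩
  rw [ge_iff_le, ← Real.le_log_iff_exp_le (hDpos m)]
  refine le_of_affine_recursion (L := fun m => Real.log (D m)) hq0 (fun j => ?_) hs
    (fun j => ?_) m
  · have h1 : 0 ≤ Real.log ((j : ℝ) + 1) :=
      Real.log_nonneg (le_add_of_nonneg_left (Nat.cast_nonneg j))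
    have h2 : 0 ≤ (j : ℝ) * Real.log q := mul_nonneg (Nat.cast_nonneg j) (Real.log_pos hq).le
    have h3 : Real.log (c / 4) ≤ 0 := Real.log_nonpos (by positivity) (by linarith)
    linarith
  · have hD := Real.rpow_pos_of_pos (hDpos j) q
    have hj : (0 : ℝ) < (j : ℝ) + 1 := Nat.cast_add_one_pos j
    have h := Real.log_le_log (by positivity) (hrec j)
    rw [Real.log_div (by positivity) (by positivity), Real.log_mul (by positivity) hD.ne',
      Real.log_mul (by positivity) (by positivity), Real.log_mul (by positivity) (by positivity),
      Real.log_rpow (hDpos j), Real.log_pow, Real.log_pow] at h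
    rw [Real.log_div hc0.ne' (by norm_num)]
    push_cast at h
    linarith
end

section
/- For every τ₀ > 0 there exists a constant c₀ > 0 such that for every continuous nonnegative function u₁ : [0,∞) → ℝ with u₁(λ) ≥ 1 for all λ ∈ [τ₀, 3τ₀], and for all t, r > 0 with τ₀ < t − r < 2τ₀ and t + r > 3τ₀: I(t,r,u₁) ≥ c₀ (sinh r)^{−1/2}. -/
open MeasureTheory intervalIntegral

/-- The radial form, at geodesic radius `r` and time `t`, of the solution of the shifted
wave equation on the hyperbolic plane with data `u(0) = 0`, `∂ₜu(0) = φ`. -/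
noncomputable def Isol (t r : ℝ) (φ : ℝ → ℝ) : ℝ :=
  (1 / (Real.pi * Real.sqrt 2)) *
    ∫ s in (0 : ℝ)..t, ∫ l in |r - s|..(r + s),
      φ l * Real.sinh l * Real.sinh s *
        ((Real.cosh t - Real.cosh s) * (Real.cosh (r + s) - Real.cosh l) *
          (Real.cosh l - Real.cosh (r - s))) ^ (-(1 / 2) : ℝ)

lemma rpow_neg_half_eq_inv_sqrt {x : ℝ} (hx : 0 ≤ x) : x ^ (-(1 / 2) : ℝ) = (√x)⁻¹ := by
  rw [Real.rpow_neg hx, Real.sqrt_eq_rpow]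

lemma cosh_lt_cosh_of_nonneg {a b : ℝ} (ha : 0 ≤ a) (hab : a < b) : Real.cosh a < Real.cosh b := by
  rw [Real.cosh_lt_cosh, abs_of_nonneg ha, abs_of_nonneg (ha.trans hab.le)]
  exact hab

/-- The arcsine density in the variable `cosh l` has total mass `π`. -/
lemma arcsine_density_cosh {a b : ℝ} (ha : 0 ≤ a) (hab : a < b) :
    IntervalIntegrable (fun l => Real.sinh l *
        ((Real.cosh b - Real.cosh l) * (Real.cosh l - Real.cosh a)) ^ (-(1 / 2) : ℝ)) volume a b ∧
      ∫ l in a..b, Real.sinh l *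
        ((Real.cosh b - Real.cosh l) * (Real.cosh l - Real.cosh a)) ^ (-(1 / 2) : ℝ)
        = Real.pi := by
  have hd : 0 < Real.cosh b - Real.cosh a := sub_pos.2 (cosh_lt_cosh_of_nonneg ha hab)
  set d := Real.cosh b - Real.cosh a with hd_def
  let g : ℝ → ℝ := fun l => Real.arcsin ((2 * Real.cosh l - Real.cosh a - Real.cosh b) / d)
  have hcont : Continuous g := by fun_prop
  have hderiv : ∀ l ∈ Set.Ioo a b, HasDerivAt g (Real.sinh l *
      ((Real.cosh b - Real.cosh l) * (Real.cosh l - Real.cosh a)) ^ (-(1 / 2) : ℝ)) l := by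
    intro l hl
    have h1 : 0 < Real.cosh l - Real.cosh a := sub_pos.2 (cosh_lt_cosh_of_nonneg ha hl.1)
    have h2 : 0 < Real.cosh b - Real.cosh l :=
      sub_pos.2 (cosh_lt_cosh_of_nonneg (ha.trans hl.1.le) hl.2)
    have hinner : HasDerivAt (fun l => (2 * Real.cosh l - Real.cosh a - Real.cosh b) / d)
        (2 * Real.sinh l / d) l :=
      ((((Real.hasDerivAt_cosh l).const_mul 2).sub_const _).sub_const _).div_const _
    have hne₁ : (2 * Real.cosh l - Real.cosh a - Real.cosh b) / d ≠ -1 := by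
      rw [Ne, div_eq_iff hd.ne']; intro h; linarith
    have hne₂ : (2 * Real.cosh l - Real.cosh a - Real.cosh b) / d ≠ 1 := by
      rw [Ne, div_eq_iff hd.ne']; intro h; linarith
    have hsqrt : √(1 - ((2 * Real.cosh l - Real.cosh a - Real.cosh b) / d) ^ 2) =
        2 / d * √((Real.cosh b - Real.cosh l) * (Real.cosh l - Real.cosh a)) := by
      rw [show 1 - ((2 * Real.cosh l - Real.cosh a - Real.cosh b) / d) ^ 2 =
          (2 / d) ^ 2 * ((Real.cosh b - Real.cosh l) * (Real.cosh l - Real.cosh a)) by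
        field_simp
        rw [hd_def]
        ring, Real.sqrt_mul (sq_nonneg _), Real.sqrt_sq (by positivity)]
    have h := (Real.hasDerivAt_arcsin hne₁ hne₂).comp l hinner
    refine h.congr_deriv ?_
    have hpos : 0 < √((Real.cosh b - Real.cosh l) * (Real.cosh l - Real.cosh a)) :=
      Real.sqrt_pos.2 (mul_pos h2 h1)
    rw [hsqrt, rpow_neg_half_eq_inv_sqrt (mul_pos h2 h1).le]
    field_simp
  have hnonneg : ∀ l ∈ Set.Ioo a b, 0 ≤ Real.sinh l *
      ((Real.cosh b - Real.cosh l) * (Real.cosh l - Real.cosh a)) ^ (-(1 / 2) : ℝ) := by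
    intro l hl
    have h1 := cosh_lt_cosh_of_nonneg ha hl.1
    have h2 := cosh_lt_cosh_of_nonneg (ha.trans hl.1.le) hl.2
    exact mul_nonneg (Real.sinh_nonneg_iff.2 (ha.trans hl.1.le))
      (Real.rpow_nonneg (mul_nonneg (by linarith) (by linarith)) _)
  have hint := (intervalIntegrable_iff_integrableOn_Ioc_of_le hab.le).2
    (integrableOn_deriv_of_nonneg hcont.continuousOn hderiv hnonneg)
  refine ⟨hint, ?_⟩
  rw [integral_eq_sub_of_hasDerivAt_of_le hab.le hcont.continuousOn hderiv hint]
  have hb : (2 * Real.cosh b - Real.cosh a - Real.cosh b) / d = 1 := by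
    rw [div_eq_iff hd.ne', hd_def]; ring
  have ha : (2 * Real.cosh a - Real.cosh a - Real.cosh b) / d = -1 := by
    rw [div_eq_iff hd.ne', hd_def]; ring
  simp only [g, hb, ha, Real.arcsin_one, Real.arcsin_neg_one]
  ring

lemma intervalIntegrable_sinh_mul_rpow {t : ℝ} (ht : 0 ≤ t) :
    IntervalIntegrable (fun s => Real.sinh s * (Real.cosh t - Real.cosh s) ^ (-(1 / 2) : ℝ))
      volume 0 t := by
  have hcont : Continuous fun s => -2 * √(Real.cosh t - Real.cosh s) := by fun_prop
  refine (intervalIntegrable_iff_integrableOn_Ioc_of_le ht).2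
    (integrableOn_deriv_of_nonneg hcont.continuousOn ?_ ?_)
  · intro s hs
    have h : 0 < Real.cosh t - Real.cosh s := sub_pos.2 (cosh_lt_cosh_of_nonneg hs.1.le hs.2)
    refine ((((Real.hasDerivAt_cosh s).const_sub (Real.cosh t)).sqrt h.ne').const_mul
      (-2)).congr_deriv ?_
    have hpos := Real.sqrt_pos.2 h
    rw [rpow_neg_half_eq_inv_sqrt h.le]
    field_simp
  · intro s hs
    have h : 0 < Real.cosh t - Real.cosh s := sub_pos.2 (cosh_lt_cosh_of_nonneg hs.1.le hs.2)
    exact mul_nonneg (Real.sinh_nonneg_iff.2 hs.1.le) (Real.rpow_nonneg h.le _)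

/-- The integrand of `Isol`. -/
noncomputable def isolIntegrand (t r : ℝ) (φ : ℝ → ℝ) (s l : ℝ) : ℝ :=
  φ l * Real.sinh l * Real.sinh s *
    ((Real.cosh t - Real.cosh s) * (Real.cosh (r + s) - Real.cosh l) *
      (Real.cosh l - Real.cosh (r - s))) ^ (-(1 / 2) : ℝ)

section

variable {t r s l : ℝ} {φ : ℝ → ℝ}

lemma abs_sub_lt_add (hr : 0 < r) (hs : 0 < s) : |r - s| < r + s := by
  rw [abs_lt]; constructor <;> linarith

lemma isolIntegrand_factors_nonneg (hs : 0 ≤ s) (hst : s ≤ t)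
    (hl : l ∈ Set.Icc |r - s| (r + s)) :
    0 ≤ Real.cosh t - Real.cosh s ∧ 0 ≤ Real.cosh (r + s) - Real.cosh l ∧
      0 ≤ Real.cosh l - Real.cosh (r - s) := by
  have hl0 : 0 ≤ l := (abs_nonneg _).trans hl.1
  refine ⟨sub_nonneg.2 ?_, sub_nonneg.2 ?_, sub_nonneg.2 ?_⟩ <;> rw [Real.cosh_le_cosh]
  · rwa [abs_of_nonneg hs, abs_of_nonneg (hs.trans hst)]
  · rw [abs_of_nonneg hl0, abs_of_nonneg (hl0.trans hl.2)]; exact hl.2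
  · rw [abs_of_nonneg hl0]; exact hl.1

lemma isolIntegrand_nonneg (hφ : ∀ x ∈ Set.Ici (0 : ℝ), 0 ≤ φ x) (hs : 0 ≤ s) (hst : s ≤ t)
    (hl : l ∈ Set.Icc |r - s| (r + s)) : 0 ≤ isolIntegrand t r φ s l := by
  obtain ⟨h1, h2, h3⟩ := isolIntegrand_factors_nonneg hs hst hl
  have hl0 : 0 ≤ l := (abs_nonneg _).trans hl.1
  exact mul_nonneg (mul_nonneg (mul_nonneg (hφ l hl0) (Real.sinh_nonneg_iff.2 hl0))
    (Real.sinh_nonneg_iff.2 hs)) (Real.rpow_nonneg (mul_nonneg (mul_nonneg h1 h2) h3) _)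

/-- Upper bound of the integrand by a multiple of the arcsine density. -/
lemma isolIntegrand_le {M : ℝ} (hM : φ l ≤ M) (hs : 0 ≤ s) (hst : s ≤ t)
    (hl : l ∈ Set.Icc |r - s| (r + s)) :
    isolIntegrand t r φ s l ≤
      M * (Real.sinh s * (Real.cosh t - Real.cosh s) ^ (-(1 / 2) : ℝ)) * (Real.sinh l *
        ((Real.cosh (r + s) - Real.cosh l) * (Real.cosh l - Real.cosh |r - s|)) ^
          (-(1 / 2) : ℝ)) := by
  obtain ⟨h1, h2, h3⟩ := isolIntegrand_factors_nonneg hs hst hl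
  have hl0 : 0 ≤ Real.sinh l := Real.sinh_nonneg_iff.2 ((abs_nonneg _).trans hl.1)
  have hs0 : 0 ≤ Real.sinh s := Real.sinh_nonneg_iff.2 hs
  have h4 : 0 ≤ (Real.cosh t - Real.cosh s) ^ (-(1 / 2) : ℝ) := Real.rpow_nonneg h1 _
  have h5 : 0 ≤ ((Real.cosh (r + s) - Real.cosh l) * (Real.cosh l - Real.cosh (r - s))) ^
      (-(1 / 2) : ℝ) := Real.rpow_nonneg (mul_nonneg h2 h3) _
  rw [isolIntegrand, mul_assoc (Real.cosh t - Real.cosh s),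
    Real.mul_rpow h1 (mul_nonneg h2 h3), Real.cosh_abs]
  calc _ = φ l * (Real.sinh l * Real.sinh s * ((Real.cosh t - Real.cosh s) ^ (-(1 / 2) : ℝ) *
        ((Real.cosh (r + s) - Real.cosh l) * (Real.cosh l - Real.cosh (r - s))) ^
          (-(1 / 2) : ℝ))) := by ring
    _ ≤ M * _ := mul_le_mul_of_nonneg_right hM (by positivity)
    _ = _ := by ring

lemma isolIntegrand_intervalIntegrable (hφc : ContinuousOn φ (Set.Ici 0))
    (hφ : ∀ x ∈ Set.Ici (0 : ℝ), 0 ≤ φ x) {M : ℝ} (hM : ∀ x ∈ Set.Icc 0 (r + t), φ x ≤ M)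
    (hr : 0 < r) (hs : 0 < s) (hst : s ≤ t) :
    IntervalIntegrable (isolIntegrand t r φ s) volume |r - s| (r + s) := by
  have hlt := abs_sub_lt_add hr hs
  refine ((arcsine_density_cosh (abs_nonneg (r - s)) hlt).1.const_mul
    (M * (Real.sinh s * (Real.cosh t - Real.cosh s) ^ (-(1 / 2) : ℝ)))).mono_fun' ?_ ?_
  · rw [Set.uIoc_of_le hlt.le]
    have hφm : AEStronglyMeasurable φ (volume.restrict (Set.Ioc |r - s| (r + s))) :=
      (hφc.mono fun x hx => (abs_nonneg _).trans hx.1.le).aestronglyMeasurable measurableSet_Ioc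
    have hm : Measurable fun l => ((Real.cosh t - Real.cosh s) *
        (Real.cosh (r + s) - Real.cosh l) *
          (Real.cosh l - Real.cosh (r - s))) ^ (-(1 / 2) : ℝ) := by fun_prop
    exact ((hφm.mul Real.continuous_sinh.aestronglyMeasurable).mul_const _).mul
      hm.aestronglyMeasurable
  · rw [Set.uIoc_of_le hlt.le]
    filter_upwards [ae_restrict_mem measurableSet_Ioc] with l hl
    have hl' := Set.Ioc_subset_Icc_self hl
    rw [Real.norm_of_nonneg (isolIntegrand_nonneg hφ hs.le hst hl')]
    exact isolIntegrand_le (hM l ⟨(abs_nonneg _).trans hl'.1, hl'.2.trans (by linarith)⟩)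
      hs.le hst hl'

lemma aestronglyMeasurable_integral_isolIntegrand (hφc : ContinuousOn φ (Set.Ici 0))
    (hr : 0 < r) :
    AEStronglyMeasurable (fun s => ∫ l in |r - s|..(r + s), isolIntegrand t r φ s l)
      (volume.restrict (Set.Ioc 0 t)) := by
  let ψ : ℝ → ℝ := fun l => φ (max 0 l)
  have hψ : Continuous ψ :=
    hφc.comp_continuous (by fun_prop) fun l => le_max_left 0 l
  have hS : MeasurableSet {p : ℝ × ℝ | |r - p.1| < p.2 ∧ p.2 ≤ r + p.1} :=
    MeasurableSet.inter
      (measurableSet_lt (f := fun p : ℝ × ℝ => |r - p.1|) (g := fun p => p.2)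
        (by fun_prop) (by fun_prop))
      (measurableSet_le (f := fun p : ℝ × ℝ => p.2) (g := fun p => r + p.1)
        (by fun_prop) (by fun_prop))
  have hm : Measurable fun p : ℝ × ℝ => isolIntegrand t r ψ p.1 p.2 := by
    unfold isolIntegrand
    fun_prop
  refine ((hm.indicator hS).stronglyMeasurable.integral_prod_right'
    (ν := volume)).aestronglyMeasurable.congr ?_
  filter_upwards [ae_restrict_mem measurableSet_Ioc] with s hs
  rw [integral_of_le (abs_sub_lt_add hr hs.1).le, ← MeasureTheory.integral_indicator measurableSet_Ioc]
  congr 1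
  ext l
  by_cases hl : l ∈ Set.Ioc |r - s| (r + s)
  · have hl0 : 0 ≤ l := (abs_nonneg _).trans hl.1.le
    rw [Set.indicator_of_mem hl, Set.indicator_of_mem (by exact hl)]
    simp only [isolIntegrand, ψ, max_eq_right hl0]
  · rw [Set.indicator_of_notMem hl, Set.indicator_of_notMem (by exact hl)]

lemma integral_isolIntegrand_nonneg (hφ : ∀ x ∈ Set.Ici (0 : ℝ), 0 ≤ φ x) (hr : 0 < r)
    (hs : 0 < s) (hst : s ≤ t) : 0 ≤ ∫ l in |r - s|..(r + s), isolIntegrand t r φ s l :=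
  integral_nonneg (abs_sub_lt_add hr hs).le fun _ hl => isolIntegrand_nonneg hφ hs.le hst hl

lemma integral_isolIntegrand_intervalIntegrable (hφc : ContinuousOn φ (Set.Ici 0))
    (hφ : ∀ x ∈ Set.Ici (0 : ℝ), 0 ≤ φ x) {M : ℝ} (hM : ∀ x ∈ Set.Icc 0 (r + t), φ x ≤ M)
    (ht : 0 < t) (hr : 0 < r) :
    IntervalIntegrable (fun s => ∫ l in |r - s|..(r + s), isolIntegrand t r φ s l)
      volume 0 t := by
  refine ((intervalIntegrable_sinh_mul_rpow ht.le).const_mul (M * Real.pi)).mono_fun' ?_ ?_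
  · rw [Set.uIoc_of_le ht.le]
    exact aestronglyMeasurable_integral_isolIntegrand hφc hr
  · rw [Set.uIoc_of_le ht.le]
    filter_upwards [ae_restrict_mem measurableSet_Ioc] with s hs
    have hlt := abs_sub_lt_add hr hs.1
    obtain ⟨hint, hπ⟩ := arcsine_density_cosh (abs_nonneg (r - s)) hlt
    rw [Real.norm_of_nonneg (integral_isolIntegrand_nonneg hφ hr hs.1 hs.2)]
    calc _ ≤ _ := integral_mono_on hlt.le
          (isolIntegrand_intervalIntegrable hφc hφ hM hr hs.1 hs.2) (hint.const_mul _)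
          fun l hl => isolIntegrand_le (hM l ⟨(abs_nonneg _).trans hl.1,
            hl.2.trans (by linarith [hs.2])⟩) hs.1.le hs.2 hl
      _ = _ := by rw [intervalIntegral.integral_const_mul, hπ]; ring

end

lemma sub_mul_le_integral_of_le {f : ℝ → ℝ} {a b c d m : ℝ} (hca : c ≤ a) (hab : a ≤ b)
    (hbd : b ≤ d) (hf : ∀ x ∈ Set.Ioc c d, 0 ≤ f x) (hfi : IntervalIntegrable f volume c d)
    (hm : ∀ x ∈ Set.Icc a b, m ≤ f x) : (b - a) * m ≤ ∫ x in c..d, f x := by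
  have hsub : Set.uIcc a b ⊆ Set.uIcc c d := by
    rw [Set.uIcc_of_le hab, Set.uIcc_of_le (hca.trans (hab.trans hbd))]
    exact Set.Icc_subset_Icc hca hbd
  calc (b - a) * m = ∫ _ in a..b, m := by simp
    _ ≤ ∫ x in a..b, f x :=
      integral_mono_on hab intervalIntegrable_const (hfi.mono_set hsub) hm
    _ ≤ _ := integral_mono_interval hca hab hbd
      (by filter_upwards [ae_restrict_mem measurableSet_Ioc] with x hx using hf x hx) hfi

lemma cosh_le_exp_of_nonneg {x : ℝ} (hx : 0 ≤ x) : Real.cosh x ≤ Real.exp x := by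
  have := Real.sinh_nonneg_iff.2 hx
  have := Real.cosh_add_sinh x
  linarith

lemma mul_exp_le_sinh {a r : ℝ} (har : a ≤ r) :
    (1 - Real.exp (-(2 * a))) / 2 * Real.exp r ≤ Real.sinh r := by
  have h1 : Real.exp (-r) ≤ Real.exp (-(2 * a)) * Real.exp r := by
    rw [← Real.exp_add, Real.exp_le_exp]; linarith
  rw [Real.sinh_eq]
  linarith

/-- Pointwise lower bound of the integrand on a square of side `τ / 4`. -/
lemma le_isolIntegrand {τ t r s l : ℝ} {φ : ℝ → ℝ} (hτ : 0 < τ) (hr : τ / 2 < r)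
    (htr : τ < t - r) (htr' : t - r < 2 * τ) (hs : s ∈ Set.Icc (r + τ / 2) (r + 3 * τ / 4))
    (hl : l ∈ Set.Icc τ (5 * τ / 4)) (hφ : 1 ≤ φ l) :
    Real.sinh τ * (Real.exp (4 * τ) / ((1 - Real.exp (-τ)) / 2) ^ 3) ^ (-(1 / 2) : ℝ) *
      Real.sinh r ^ (-(1 / 2) : ℝ) ≤ isolIntegrand t r φ s l := by
  obtain ⟨hs1, hs2⟩ := hs
  obtain ⟨hl1, hl2⟩ := hl
  have hk : 0 < (1 - Real.exp (-τ)) / 2 := by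
    have : Real.exp (-τ) < 1 := Real.exp_lt_one_iff.2 (by linarith)
    linarith
  have hkr : (1 - Real.exp (-τ)) / 2 * Real.exp r ≤ Real.sinh r := by
    have h := mul_exp_le_sinh hr.le
    rwa [show 2 * (τ / 2) = τ by ring] at h
  set k := (1 - Real.exp (-τ)) / 2
  have hsr : 0 < Real.sinh r := Real.sinh_pos_iff.2 (by linarith)
  have hsτ : 0 < Real.sinh τ := Real.sinh_pos_iff.2 hτ
  have h1 : 0 < Real.cosh t - Real.cosh s :=
    sub_pos.2 (cosh_lt_cosh_of_nonneg (by linarith) (by linarith))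
  have h2 : 0 < Real.cosh (r + s) - Real.cosh l :=
    sub_pos.2 (cosh_lt_cosh_of_nonneg (by linarith) (by linarith))
  have h3 : 0 < Real.cosh l - Real.cosh (r - s) := by
    rw [← Real.cosh_abs (r - s), abs_sub_comm, abs_of_nonneg (by linarith)]
    exact sub_pos.2 (cosh_lt_cosh_of_nonneg (by linarith) (by linarith))
  have hP : (Real.cosh t - Real.cosh s) * (Real.cosh (r + s) - Real.cosh l) *
      (Real.cosh l - Real.cosh (r - s)) ≤ Real.exp (4 * τ) / k ^ 3 * Real.sinh r ^ 3 := by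
    calc _ ≤ Real.exp t * Real.exp (r + s) * Real.exp l := by
          have e1 := cosh_le_exp_of_nonneg (show 0 ≤ t by linarith)
          have e2 := cosh_le_exp_of_nonneg (show 0 ≤ r + s by linarith)
          have e3 := cosh_le_exp_of_nonneg (show 0 ≤ l by linarith)
          have p1 := Real.cosh_pos s
          have p2 := Real.cosh_pos l
          have p3 := Real.cosh_pos (r - s)
          gcongr <;> linarith
      _ ≤ Real.exp (4 * τ) * Real.exp r ^ 3 := by
          rw [← Real.exp_nat_mul, ← Real.exp_add, ← Real.exp_add, ← Real.exp_add,
            Real.exp_le_exp]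
          push_cast
          linarith
      _ = Real.exp (4 * τ) / k ^ 3 * (k * Real.exp r) ^ 3 := by field_simp
      _ ≤ _ := by gcongr
  have hpow : Real.sinh r * (Real.sinh r ^ 3) ^ (-(1 / 2) : ℝ) =
      Real.sinh r ^ (-(1 / 2) : ℝ) := by
    rw [← Real.rpow_natCast, ← Real.rpow_mul hsr.le, ← Real.rpow_one_add' hsr.le (by norm_num)]
    norm_num
  calc _ = 1 * Real.sinh τ * Real.sinh r *
        (Real.exp (4 * τ) / k ^ 3 * Real.sinh r ^ 3) ^ (-(1 / 2) : ℝ) := by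
        rw [Real.mul_rpow (by positivity) (by positivity), ← hpow]; ring
    _ ≤ _ := by
        have hrs : Real.sinh r ≤ Real.sinh s := Real.sinh_le_sinh.2 (by linarith)
        have hτl : Real.sinh τ ≤ Real.sinh l := Real.sinh_le_sinh.2 hl1
        have hpos := mul_pos (mul_pos h1 h2) h3
        have hrpow := Real.rpow_le_rpow_of_nonpos hpos hP (show (-(1 / 2) : ℝ) ≤ 0 by norm_num)
        unfold isolIntegrand
        have hφl : 0 ≤ φ l * Real.sinh l := mul_nonneg (by linarith) (hsτ.le.trans hτl)
        gcongr
        exact mul_nonneg hφl (hsr.le.trans hrs)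

theorem first_step_lower_bound (τ₀ : ℝ) (hτ₀ : 0 < τ₀) :
    ∃ c₀ : ℝ, 0 < c₀ ∧
      ∀ u₁ : ℝ → ℝ, ContinuousOn u₁ (Set.Ici 0) → (∀ x ∈ Set.Ici (0 : ℝ), 0 ≤ u₁ x) →
        (∀ l ∈ Set.Icc τ₀ (3 * τ₀), 1 ≤ u₁ l) →
        ∀ t r : ℝ, 0 < t → 0 < r → τ₀ < t - r → t - r < 2 * τ₀ → 3 * τ₀ < t + r →
          Isol t r u₁ ≥ c₀ * Real.sinh r ^ (-(1 / 2) : ℝ) := by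
  have hk : 0 < (1 - Real.exp (-τ₀)) / 2 := by
    have : Real.exp (-τ₀) < 1 := Real.exp_lt_one_iff.2 (by linarith)
    linarith
  have hsinh : 0 < Real.sinh τ₀ := Real.sinh_pos_iff.2 hτ₀
  set C := Real.sinh τ₀ *
    (Real.exp (4 * τ₀) / ((1 - Real.exp (-τ₀)) / 2) ^ 3) ^ (-(1 / 2) : ℝ)
  have hCpos : 0 < C := by positivity
  refine ⟨1 / (Real.pi * √2) * (τ₀ / 4 * (τ₀ / 4 * C)), by positivity, ?_⟩
  intro u₁ hcont hnonneg hone t r ht hr htr htr' htr3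
  obtain ⟨M, hM⟩ := (isCompact_Icc.bddAbove_image
    (hcont.mono (Set.Icc_subset_Ici_self : Set.Icc 0 (r + t) ⊆ _)))
  have hM' : ∀ x ∈ Set.Icc 0 (r + t), u₁ x ≤ M := fun x hx => hM ⟨x, hx, rfl⟩
  have hinner : ∀ s ∈ Set.Icc (r + τ₀ / 2) (r + 3 * τ₀ / 4),
      τ₀ / 4 * (C * Real.sinh r ^ (-(1 / 2) : ℝ)) ≤
        ∫ l in |r - s|..(r + s), isolIntegrand t r u₁ s l := by
    intro s hs
    have hs0 : 0 < s := by linarith [hs.1]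
    have hst : s ≤ t := by linarith [hs.2]
    rw [show τ₀ / 4 = 5 * τ₀ / 4 - τ₀ by ring]
    refine sub_mul_le_integral_of_le ?_ (by linarith) (by linarith [hs.1])
      (fun l hl => isolIntegrand_nonneg hnonneg hs0.le hst (Set.Ioc_subset_Icc_self hl))
      (isolIntegrand_intervalIntegrable hcont hnonneg hM' hr hs0 hst)
      fun l hl => le_isolIntegrand hτ₀ (by linarith) htr htr' hs hl
        (hone l ⟨hl.1, by linarith [hl.2]⟩)
    rw [abs_le]
    constructor <;> linarith [hs.1, hs.2]
  have houter : τ₀ / 4 * (τ₀ / 4 * (C * Real.sinh r ^ (-(1 / 2) : ℝ))) ≤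
      ∫ s in (0 : ℝ)..t, ∫ l in |r - s|..(r + s), isolIntegrand t r u₁ s l := by
    have h := sub_mul_le_integral_of_le (by linarith) (by linarith) (by linarith)
      (fun s hs => integral_isolIntegrand_nonneg hnonneg hr hs.1 hs.2)
      (integral_isolIntegrand_intervalIntegrable hcont hnonneg hM' ht hr) hinner
    rwa [show r + 3 * τ₀ / 4 - (r + τ₀ / 2) = τ₀ / 4 by ring] at h
  calc _ = 1 / (Real.pi * √2) *
        (τ₀ / 4 * (τ₀ / 4 * (C * Real.sinh r ^ (-(1 / 2) : ℝ)))) := by ring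
    _ ≤ _ := mul_le_mul_of_nonneg_left houter (by positivity)
end
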